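/- Let (A, b, c) be an LP in dual form with A an m×n real matrix, and let (X_P, X_Q) be a fractional automorphism of (A, b, c) in which X_P is the partition matrix of a partition U of the column indices with normalized incidence matrix B (an n×k matrix). Then the original and the reduced LP attain exactly the same objective values on their feasible sets: for every x ∈ ℝ^n with A·x ≤ b entrywise there exists y ∈ ℝ^k with A·B·y ≤ b entrywise and ⟨Bᵀ·c, y⟩ = ⟨c, x⟩; and for every y ∈ ℝ^k with A·B·y ≤ b entrywise there exists x ∈ ℝ^n with A·x ≤ b entrywise and ⟨c, x⟩ = ⟨Bᵀ·c, y⟩. -/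

import Mathlib

open Matrix

/-- A square real matrix is doubly stochastic. -/
def IsDoublyStochastic {m : ℕ} (S : Matrix (Fin m) (Fin m) ℝ) : Prop :=
  (∀ i j, 0 ≤ S i j) ∧ (∀ i, ∑ j, S i j = 1) ∧ (∀ j, ∑ i, S i j = 1)

/-- A fractional automorphism of the LP `(A, b, c)` in dual form. -/
def IsFractionalAutomorphism {m n : ℕ} (A : Matrix (Fin m) (Fin n) ℝ)
    (b : Fin m → ℝ) (c : Fin n → ℝ)
    (XP : Matrix (Fin n) (Fin n) ℝ) (XQ : Matrix (Fin m) (Fin m) ℝ) : Prop :=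
  IsDoublyStochastic XP ∧ IsDoublyStochastic XQ ∧
    A * XP = XQ * A ∧ XP.vecMul c = c ∧ XQ.mulVec b = b

/-- The partition matrix of a partition (given by the class map `f`). -/
noncomputable def partitionMatrix {n k : ℕ} (f : Fin n → Fin k) :
    Matrix (Fin n) (Fin n) ℝ :=
  fun i j =>
    if f i = f j then (1 : ℝ) / ((Finset.univ.filter fun l => f l = f i).card : ℝ)
    else 0

/-- The normalized incidence matrix of a partition. -/
noncomputable def incidenceMatrix {n k : ℕ} (f : Fin n → Fin k) :
    Matrix (Fin n) (Fin k) ℝ :=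
  fun i m =>
    if f i = m then (1 : ℝ) / Real.sqrt ((Finset.univ.filter fun l => f l = m).card : ℝ)
    else 0

theorem partitionMatrix_eq_aux {n k : ℕ} (f : Fin n → Fin k) :
    incidenceMatrix f * (incidenceMatrix f)ᵀ = partitionMatrix f := by
  ext i j
  simp only [Matrix.mul_apply, Matrix.transpose_apply, incidenceMatrix, partitionMatrix]
  rw [Finset.sum_eq_single (f i)]
  · by_cases h : f i = f j
    · rw [if_pos rfl, if_pos h.symm, if_pos h, div_mul_div_comm, Real.mul_self_sqrt (by positivity),
        one_mul]
    · rw [if_neg h, if_neg (fun h' : f j = f i => h h'.symm), mul_zero]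
  · intro l _ hl
    rw [if_neg (fun h => hl h.symm), zero_mul]
  · simp

/-- The original LP `(A,b,c)` and the reduced LP
`(A·B, b, Bᵀ·c)` attain exactly the same objective values on their
feasible sets. -/
theorem lifted_lp_same_values {m n k : ℕ}
    (A : Matrix (Fin m) (Fin n) ℝ) (b : Fin m → ℝ) (c : Fin n → ℝ)
    (f : Fin n → Fin k) (XQ : Matrix (Fin m) (Fin m) ℝ)
    (hFA : IsFractionalAutomorphism A b c (partitionMatrix f) XQ) :
    (∀ x : Fin n → ℝ, A.mulVec x ≤ b →
      ∃ y : Fin k → ℝ, (A * incidenceMatrix f).mulVec y ≤ b ∧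
        (incidenceMatrix f)ᵀ.mulVec c ⬝ᵥ y = c ⬝ᵥ x) ∧
    (∀ y : Fin k → ℝ, (A * incidenceMatrix f).mulVec y ≤ b →
      ∃ x : Fin n → ℝ, A.mulVec x ≤ b ∧
        c ⬝ᵥ x = (incidenceMatrix f)ᵀ.mulVec c ⬝ᵥ y) := by
  obtain ⟨_, ⟨hnn, _, _⟩, hA, hc, hb⟩ := hFA
  have key : ∀ y : Fin k → ℝ,
      (incidenceMatrix f)ᵀ.mulVec c ⬝ᵥ y = c ⬝ᵥ (incidenceMatrix f).mulVec y := by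
    intro y
    rw [Matrix.mulVec_transpose, Matrix.dotProduct_mulVec]
  constructor
  · intro x hx
    refine ⟨(incidenceMatrix f)ᵀ.mulVec x, ?_, ?_⟩
    · rw [Matrix.mulVec_mulVec, Matrix.mul_assoc, partitionMatrix_eq_aux, hA,
        ← Matrix.mulVec_mulVec]
      intro i
      rw [← congrFun hb i]
      change ∑ j, XQ i j * (A.mulVec x) j ≤ ∑ j, XQ i j * b j
      exact Finset.sum_le_sum fun j _ => mul_le_mul_of_nonneg_left (hx j) (hnn i j)
    · rw [key, Matrix.mulVec_mulVec, partitionMatrix_eq_aux, Matrix.dotProduct_mulVec, hc]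
  · intro y hy
    exact ⟨(incidenceMatrix f).mulVec y, by rwa [Matrix.mulVec_mulVec], (key y).symm⟩
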